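/- Every instance G = (A∪B, E) with capacities and strict preferences admits a popular matching. -/

import Mathlib

/-!
Many-to-many matchings with two-sided preferences, votes, and popularity,
following "Popular Matchings in the Many-to-Many Setting".
-/

/-- The vote of a vertex with rank function `r` (smaller rank = more preferred)
comparing two options, where `none` stands for `null` (ranked below everything). -/
def vote {β : Type*} [DecidableEq β] (r : β → ℕ) : Option β → Option β → ℤ
  | none, none => 0
  | some _, none => 1
  | none, some _ => -1
  | some x, some y => if x = y then 0 else if r x < r y then 1 else -1

/-- The common length `k` of the arrays compared in `δ_u(S₀,S₁)`:
after padding the smaller of `S₀, S₁` with nulls and removing common elements. -/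
def kOf {β : Type*} [DecidableEq β] (S₀ S₁ : Finset β) : ℕ :=
  max S₀.card S₁.card - (S₀ ∩ S₁).card

/-- `S₀ ∖ S₁`, viewed as an array of `Option`s padded with `none` (null) to length `k`. -/
noncomputable def padded {β : Type*} [DecidableEq β] (S₀ S₁ : Finset β) (k : ℕ) : List (Option β) :=
  ((S₀ \ S₁).toList.map some) ++ List.replicate (k - (S₀ \ S₁).card) none

/-- `δ_u(S₀,S₁)`: the minimum, over all permutations `σ` of `{1,…,k}`, of
`Σ_i vote_u(S'₀[i], S'₁[σ(i)])`. -/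
noncomputable def deltaSet {β : Type*} [DecidableEq β] (r : β → ℕ) (S₀ S₁ : Finset β) : ℤ :=
  Finset.univ.inf' ⟨1, Finset.mem_univ 1⟩ fun σ : Equiv.Perm (Fin (kOf S₀ S₁)) =>
    ∑ i : Fin (kOf S₀ S₁),
      vote r ((padded S₀ S₁ (kOf S₀ S₁)).getD (i : ℕ) none)
             ((padded S₁ S₀ (kOf S₀ S₁)).getD (σ i : ℕ) none)

/-- A bipartite instance `G = (A ∪ B, E)` with capacities `≥ 1` and strict
preferences of every vertex over its neighbors (given by injective-on-neighbors
rank functions; smaller rank = more preferred). -/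
structure PrefInstance (α β : Type*) [Fintype α] [Fintype β] [DecidableEq α] [DecidableEq β] where
  E : Finset (α × β)
  capA : α → ℕ
  capB : β → ℕ
  rankA : α → β → ℕ
  rankB : β → α → ℕ
  capA_pos : ∀ a, 1 ≤ capA a
  capB_pos : ∀ b, 1 ≤ capB b
  rankA_injOn : ∀ a, Set.InjOn (rankA a) {b | (a, b) ∈ E}
  rankB_injOn : ∀ b, Set.InjOn (rankB b) {a | (a, b) ∈ E}

namespace PrefInstance

variable {α β : Type*} [Fintype α] [Fintype β] [DecidableEq α] [DecidableEq β]

/-- `M(a)`: the set of `B`-vertices matched to `a` in `M`. -/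
def rowSet (M : Finset (α × β)) (a : α) : Finset β :=
  Finset.univ.filter fun b => (a, b) ∈ M

/-- `M(b)`: the set of `A`-vertices matched to `b` in `M`. -/
def colSet (M : Finset (α × β)) (b : β) : Finset α :=
  Finset.univ.filter fun a => (a, b) ∈ M

variable (I : PrefInstance α β)

/-- `M` is a matching in `G`: a subset of `E` respecting all capacities. -/
def IsMatching (M : Finset (α × β)) : Prop :=
  M ⊆ I.E ∧ (∀ a, (rowSet M a).card ≤ I.capA a) ∧ (∀ b, (colSet M b).card ≤ I.capB b)

/-- `Δ_a(M₀,M₁) = δ_a(M₀(a), M₁(a))` for `a ∈ A`. -/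
noncomputable def DeltaA (M₀ M₁ : Finset (α × β)) (a : α) : ℤ :=
  deltaSet (I.rankA a) (rowSet M₀ a) (rowSet M₁ a)

/-- `Δ_b(M₀,M₁) = δ_b(M₀(b), M₁(b))` for `b ∈ B`. -/
noncomputable def DeltaB (M₀ M₁ : Finset (α × β)) (b : β) : ℤ :=
  deltaSet (I.rankB b) (colSet M₀ b) (colSet M₁ b)

/-- `Δ(M₀,M₁) = Σ_{u ∈ A∪B} Δ_u(M₀,M₁)`. -/
noncomputable def Delta (M₀ M₁ : Finset (α × β)) : ℤ :=
  (∑ a, I.DeltaA M₀ M₁ a) + ∑ b, I.DeltaB M₀ M₁ b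

/-- `M` is a popular matching: `Δ(M,T) ≥ 0` against every matching `T`. -/
def Popular (M : Finset (α × β)) : Prop :=
  I.IsMatching M ∧ ∀ T, I.IsMatching T → 0 ≤ I.Delta M T

/-- `M` is a weakly popular matching: `Δ(T,M) ≤ 0` for every matching `T`. -/
def WeaklyPopular (M : Finset (α × β)) : Prop :=
  I.IsMatching M ∧ ∀ T, I.IsMatching T → I.Delta T M ≤ 0

/-- The edge `(a,b) ∈ E ∖ M` blocks `M`. -/
def Blocks (M : Finset (α × β)) (a : α) (b : β) : Prop :=
  (a, b) ∈ I.E ∧ (a, b) ∉ M ∧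
  ((rowSet M a).card < I.capA a ∨ ∃ b' ∈ rowSet M a, I.rankA a b < I.rankA a b') ∧
  ((colSet M b).card < I.capB b ∨ ∃ a' ∈ colSet M b, I.rankB b a < I.rankB b a')

/-- `M` is a pairwise-stable matching: no edge blocks it. -/
def Stable (M : Finset (α × β)) : Prop :=
  I.IsMatching M ∧ ∀ a b, ¬ I.Blocks M a b

end PrefInstance

/-!
Every stable matching is popular, and stable matchings exist.

*Existence* is Fleiner's fixed-point form of Gale–Shapley. Let every vertex keep its best `cap`
offers and reject the others; the set of rejected edges is monotone in the set of offered edges.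
By Knaster–Tarski there are `X` and `Y` with `Y = E \ rejected_A X` and `X = E \ rejected_B Y`.
Then `X ∪ Y = E`, and `M = X ∩ Y` is both what `A` keeps of `X` and what `B` keeps of `Y`. An edge
outside `M` is thus rejected by an endpoint which `M` saturates with strictly better partners.

*Stable implies popular*: call `y` attractive to a vertex `u` if `u` has spare capacity in `M` or
prefers `y` to one of its partners in `M`. In any pairing of `M(u) \ T(u)` with `T(u) \ M(u)`, an
element of the latter costs `M` a vote only if it is attractive and otherwise wins `M` a vote, while
nulls on the `T` side never hurt `M`. Each edge of `T \ M` is counted in this way at both its ends,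
and by stability at least one end finds it unattractive, so the total is nonnegative.
-/

-- The maps `f` and `g` are choice functions; substitutability of `f` in the sense of Kelso and
-- Crawford is monotonicity of the rejected part `x \ f x`.
theorem exists_sup_eq_and_eq_inf_and_eq_inf {L : Type*} [CompleteBooleanAlgebra L] (e : L)
    {f g : L → L} (hf : ∀ x, f x ≤ x) (hg : ∀ y, g y ≤ y)
    (hf_mono : Monotone fun x => x \ f x) (hg_mono : Monotone fun y => y \ g y) :
    ∃ x y, x ⊔ y = e ∧ f x = x ⊓ y ∧ g y = x ⊓ y := by
  let F : L →o L :=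
    { toFun := fun x => e \ ((e \ (x \ f x)) \ g (e \ (x \ f x)))
      monotone' := fun _ _ h => sdiff_le_sdiff_left (hg_mono (sdiff_le_sdiff_left (hf_mono h))) }
  obtain ⟨x, y, hx, hy⟩ : ∃ x y, e \ (y \ g y) = x ∧ e \ (x \ f x) = y :=
    ⟨F.lfp, _, F.map_lfp, rfl⟩
  have hxe : x ≤ e := hx ▸ sdiff_le
  have hye : y ≤ e := hy ▸ sdiff_le
  refine ⟨x, y, le_antisymm (sup_le hxe hye) ?_, ?_, ?_⟩
  · calc e ≤ x ⊔ e \ x := le_sup_sdiff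
      _ ≤ x ⊔ y := sup_le_sup_left (hy ▸ sdiff_le_sdiff_left sdiff_le) x
  · rw [← hy, ← inf_sdiff_assoc, inf_eq_left.2 hxe, sdiff_sdiff_eq_self (hf x)]
  · rw [← hx, inf_comm, ← inf_sdiff_assoc, inf_eq_left.2 hye, sdiff_sdiff_eq_self (hg y)]

section Keep

variable {γ R : Type*} {r : γ → R} {c : ℕ} {S T : Finset γ} {x y : γ}

/-- `y` is attractive to a vertex with capacity `c`, rank function `r` and set of partners `S`: the
vertex has spare capacity or prefers `y` to one of its partners. An edge outside a matching blocks
it if each end is attractive to the other. -/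
def Attractive [LT R] (r : γ → R) (c : ℕ) (S : Finset γ) (y : γ) : Prop :=
  S.card < c ∨ ∃ x ∈ S, r y < r x

section LT

variable [LT R] [DecidableLT R]

/-- The elements of `S` kept by a vertex of capacity `c` with rank function `r`: those with fewer
than `c` strictly better elements in `S`. If the ranks are linearly ordered and injective on `S`,
these are the best `min c S.card` elements. -/
def keep (r : γ → R) (c : ℕ) (S : Finset γ) : Finset γ :=
  {x ∈ S | {y ∈ S | r y < r x}.card < c}

theorem mem_keep : x ∈ keep r c S ↔ x ∈ S ∧ {y ∈ S | r y < r x}.card < c :=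
  Finset.mem_filter

theorem keep_subset : keep r c S ⊆ S :=
  Finset.filter_subset _ _

theorem mem_keep_of_subset (hST : S ⊆ T) (hx : x ∈ S) (hxT : x ∈ keep r c T) : x ∈ keep r c S :=
  mem_keep.2 ⟨hx, (Finset.card_le_card (Finset.filter_subset_filter _ hST)).trans_lt
    (mem_keep.1 hxT).2⟩

end LT

theorem mem_keep_of_le [Preorder R] [DecidableLT R] (hx : x ∈ S) (hy : y ∈ keep r c S)
    (hxy : r x ≤ r y) : x ∈ keep r c S := by
  have hsub : {z ∈ S | r z < r x} ⊆ {z ∈ S | r z < r y} :=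
    Finset.monotone_filter_right S fun _ _ hz => hz.trans_le hxy
  exact mem_keep.2 ⟨hx, (Finset.card_le_card hsub).trans_lt (mem_keep.1 hy).2⟩

variable [LinearOrder R]

theorem card_keep_le (hr : Set.InjOn r S) : (keep r c S).card ≤ c := by
  classical
  obtain hempty | hne := (keep r c S).eq_empty_or_nonempty
  · simp [hempty]
  obtain ⟨worst, hworst, hle⟩ := Finset.exists_max_image (keep r c S) r hne
  have hsub : (keep r c S).erase worst ⊆ {y ∈ S | r y < r worst} := fun y hy => by
    obtain ⟨hy_ne, hyk⟩ := Finset.mem_erase.1 hy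
    have hr_ne : r y ≠ r worst := fun h => hy_ne (hr (keep_subset hyk) (keep_subset hworst) h)
    exact Finset.mem_filter.2 ⟨keep_subset hyk, (hle y hyk).lt_of_ne hr_ne⟩
  have hlt : ((keep r c S).erase worst).card < c :=
    (Finset.card_le_card hsub).trans_lt (mem_keep.1 hworst).2
  have := Finset.card_erase_add_one hworst
  lia

theorem le_card_keep_of_notMem (hx : x ∈ S) (hxk : x ∉ keep r c S) : c ≤ (keep r c S).card := by
  classical
  obtain ⟨best, hbest, hle⟩ := Finset.exists_min_image (S \ keep r c S) r
    ⟨x, Finset.mem_sdiff.2 ⟨hx, hxk⟩⟩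
  obtain ⟨hbestS, hbestk⟩ := Finset.mem_sdiff.1 hbest
  have hsub : {y ∈ S | r y < r best} ⊆ keep r c S := fun y hy => by
    obtain ⟨hyS, hlt⟩ := Finset.mem_filter.1 hy
    by_contra hyk
    exact (hle y (Finset.mem_sdiff.2 ⟨hyS, hyk⟩)).not_gt hlt
  calc c ≤ {y ∈ S | r y < r best}.card := not_lt.1 fun h => hbestk (mem_keep.2 ⟨hbestS, h⟩)
    _ ≤ (keep r c S).card := Finset.card_le_card hsub

theorem not_attractive_keep (hx : x ∈ S) (hxk : x ∉ keep r c S) :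
    ¬ Attractive r c (keep r c S) x := by
  rintro (hlt | ⟨y, hy, hxy⟩)
  · exact (le_card_keep_of_notMem hx hxk).not_gt hlt
  · exact hxk (mem_keep_of_le hx hy hxy.le)

end Keep

section Padded

variable {γ : Type*} [DecidableEq γ] {S₀ S₁ : Finset γ} {k : ℕ}

theorem card_sdiff_le_kOf_left (S₀ S₁ : Finset γ) : (S₀ \ S₁).card ≤ kOf S₀ S₁ := by
  have := Finset.card_sdiff_add_card_inter S₀ S₁
  unfold kOf
  lia

theorem card_sdiff_le_kOf_right (S₀ S₁ : Finset γ) : (S₁ \ S₀).card ≤ kOf S₀ S₁ := by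
  have := Finset.card_sdiff_add_card_inter S₁ S₀
  rw [Finset.inter_comm] at this
  unfold kOf
  lia

theorem length_padded (h : (S₀ \ S₁).card ≤ k) : (padded S₀ S₁ k).length = k := by
  simp [padded, h]

theorem some_mem_padded {x : γ} : some x ∈ padded S₀ S₁ k ↔ x ∈ S₀ \ S₁ := by
  simp [padded]

theorem card_lt_of_none_mem_padded (h : none ∈ padded S₀ S₁ (kOf S₀ S₁)) :
    S₀.card < S₁.card := by
  have hlt : (S₀ \ S₁).card < kOf S₀ S₁ := by simpa [padded, Nat.sub_eq_zero_iff_le] using h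
  have := Finset.card_sdiff_add_card_inter S₀ S₁
  unfold kOf at hlt
  lia

theorem getD_padded_mem (h : (S₀ \ S₁).card ≤ k) (i : Fin k) :
    (padded S₀ S₁ k).getD i none ∈ padded S₀ S₁ k := by
  rw [List.getD_eq_getElem _ _ ((length_padded h).symm ▸ i.2)]
  exact List.getElem_mem _

theorem sum_getD_padded {N : Type*} [AddCommMonoid N] (f : Option γ → N)
    (h : (S₀ \ S₁).card ≤ k) :
    ∑ i : Fin k, f ((padded S₀ S₁ k).getD i none) =
      ∑ x ∈ S₀ \ S₁, f (some x) + (k - (S₀ \ S₁).card) • f none := by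
  have hlen : k = ((padded S₀ S₁ k).map f).length := by rw [List.length_map, length_padded h]
  calc ∑ i : Fin k, f ((padded S₀ S₁ k).getD i none) = ((padded S₀ S₁ k).map f).sum := by
        rw [← Fin.sum_univ_getElem]
        refine Fintype.sum_equiv (finCongr hlen) _ _ fun i => ?_
        have hi : (i : ℕ) < (padded S₀ S₁ k).length := (length_padded h).symm ▸ i.2
        simp [hi]
    _ = ∑ x ∈ S₀ \ S₁, f (some x) + (k - (S₀ \ S₁).card) • f none := by
        simp [padded, Function.comp_def]

end Padded

section VoteBound

variable {γ : Type*} {c : ℕ} {S₀ S₁ : Finset γ} {x y : γ}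

section LT

variable {R : Type*} [LT R] {r : γ → R}

open scoped Classical in
/-- A lower bound for the vote that a vertex with capacity `c`, rank function `r` and set of
partners `S` casts in a pairing against a new partner `y`. -/
noncomputable def voteBound (r : γ → R) (c : ℕ) (S : Finset γ) (y : γ) : ℤ :=
  if Attractive r c S y then -1 else 1

theorem neg_one_le_voteBound : -1 ≤ voteBound r c S₀ y := by
  unfold voteBound
  split_ifs <;> decide

theorem voteBound_le_one : voteBound r c S₀ y ≤ 1 := by
  unfold voteBound
  split_ifs <;> decide

theorem voteBound_of_attractive (h : Attractive r c S₀ y) : voteBound r c S₀ y = -1 :=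
  if_pos h

theorem voteBound_of_not_attractive (h : ¬ Attractive r c S₀ y) : voteBound r c S₀ y = 1 :=
  if_neg h

end LT

variable [DecidableEq γ] {r : γ → ℕ}

theorem voteBound_le_vote_some (hx : x ∈ S₀) (hxy : r x ≠ r y) :
    voteBound r c S₀ y ≤ vote r (some x) (some y) := by
  have hne : x ≠ y := fun h => hxy (congrArg r h)
  obtain hlt | hgt := hxy.lt_or_gt
  · simpa [vote, hne, hlt] using voteBound_le_one
  · simp [vote, hne, hgt.not_gt, voteBound_of_attractive (.inr ⟨x, hx, hgt⟩)]

theorem elim_voteBound_le_vote (hc : S₁.card ≤ c) (hr : Set.InjOn r (S₀ ∪ S₁))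
    {o p : Option γ} (ho : o ∈ padded S₀ S₁ (kOf S₀ S₁)) (hp : p ∈ padded S₁ S₀ (kOf S₀ S₁)) :
    p.elim 0 (voteBound r c S₀) ≤ vote r o p := by
  rcases p with _ | y
  · rcases o with _ | x <;> simp [vote]
  obtain ⟨hy₁, hy₀⟩ := Finset.mem_sdiff.1 (some_mem_padded.1 hp)
  rcases o with _ | x
  · have hspare : S₀.card < c := (card_lt_of_none_mem_padded ho).trans_le hc
    exact (voteBound_of_attractive (.inl hspare)).le
  · have hx₀ : x ∈ S₀ := (Finset.mem_sdiff.1 (some_mem_padded.1 ho)).1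
    refine voteBound_le_vote_some hx₀ fun h => hy₀ ?_
    exact hr (.inl hx₀) (.inr hy₁) h ▸ hx₀

theorem sum_voteBound_le_deltaSet (hc : S₁.card ≤ c) (hr : Set.InjOn r (S₀ ∪ S₁)) :
    ∑ y ∈ S₁ \ S₀, voteBound r c S₀ y ≤ deltaSet r S₀ S₁ := by
  have hk₀ := card_sdiff_le_kOf_left S₀ S₁
  have hk₁ := card_sdiff_le_kOf_right S₀ S₁
  refine Finset.le_inf' _ _ fun σ _ => ?_
  calc ∑ y ∈ S₁ \ S₀, voteBound r c S₀ y
      = ∑ i : Fin (kOf S₀ S₁),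
          ((padded S₁ S₀ (kOf S₀ S₁)).getD i none).elim 0 (voteBound r c S₀) := by
        rw [sum_getD_padded (fun o => o.elim 0 (voteBound r c S₀)) hk₁]
        simp only [Option.elim_some, Option.elim_none, smul_zero, add_zero]
    _ = ∑ i : Fin (kOf S₀ S₁),
          ((padded S₁ S₀ (kOf S₀ S₁)).getD (σ i) none).elim 0 (voteBound r c S₀) :=
        (Equiv.sum_comp σ _).symm
    _ ≤ ∑ i : Fin (kOf S₀ S₁), vote r ((padded S₀ S₁ (kOf S₀ S₁)).getD i none)
          ((padded S₁ S₀ (kOf S₀ S₁)).getD (σ i) none) := Finset.sum_le_sum fun i _ =>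
        elim_voteBound_le_vote hc hr (getD_padded_mem hk₀ i) (getD_padded_mem hk₁ (σ i))

end VoteBound

namespace PrefInstance

section Neighbors

variable {α β : Type*} [DecidableEq α] [DecidableEq β] {M N : Finset (α × β)} {a : α} {b : β}

theorem mem_rowSet [Fintype β] : b ∈ rowSet M a ↔ (a, b) ∈ M := by
  simp [rowSet]

theorem mem_colSet [Fintype α] : a ∈ colSet M b ↔ (a, b) ∈ M := by
  simp [colSet]

theorem rowSet_mono [Fintype β] (h : M ⊆ N) : rowSet M a ⊆ rowSet N a :=
  fun _ hb => mem_rowSet.2 (h (mem_rowSet.1 hb))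

theorem colSet_mono [Fintype α] (h : M ⊆ N) : colSet M b ⊆ colSet N b :=
  fun _ ha => mem_colSet.2 (h (mem_colSet.1 ha))

theorem coe_rowSet_subset [Fintype β] (h : M ⊆ N) : (rowSet M a : Set β) ⊆ {b | (a, b) ∈ N} :=
  fun _ hb => h (mem_rowSet.1 hb)

theorem coe_colSet_subset [Fintype α] (h : M ⊆ N) : (colSet M b : Set α) ⊆ {a | (a, b) ∈ N} :=
  fun _ ha => h (mem_colSet.1 ha)

end Neighbors

variable {α β : Type*} [Fintype α] [Fintype β] [DecidableEq α] [DecidableEq β]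
variable {I : PrefInstance α β} {M T X Y : Finset (α × β)} {a : α} {b : β}

variable (I) in
/-- The choice function of the side `A`: the edges kept when each vertex of `A` keeps the best of
the edges offered in `X`. -/
def keepA (X : Finset (α × β)) : Finset (α × β) :=
  {e ∈ X | e.2 ∈ keep (I.rankA e.1) (I.capA e.1) (rowSet X e.1)}

variable (I) in
/-- The choice function of the side `B`: the edges kept when each vertex of `B` keeps the best of
the edges offered in `X`. -/
def keepB (X : Finset (α × β)) : Finset (α × β) :=
  {e ∈ X | e.1 ∈ keep (I.rankB e.2) (I.capB e.2) (colSet X e.2)}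

theorem mem_keepA : (a, b) ∈ I.keepA X ↔ b ∈ keep (I.rankA a) (I.capA a) (rowSet X a) := by
  simpa [keepA] using fun hb => mem_rowSet.1 (keep_subset hb)

theorem mem_keepB : (a, b) ∈ I.keepB X ↔ a ∈ keep (I.rankB b) (I.capB b) (colSet X b) := by
  simpa [keepB] using fun ha => mem_colSet.1 (keep_subset ha)

theorem rowSet_keepA : rowSet (I.keepA X) a = keep (I.rankA a) (I.capA a) (rowSet X a) := by
  ext b
  rw [mem_rowSet, mem_keepA]

theorem colSet_keepB : colSet (I.keepB X) b = keep (I.rankB b) (I.capB b) (colSet X b) := by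
  ext a
  rw [mem_colSet, mem_keepB]

theorem sdiff_keepA_mono : Monotone fun X => X \ I.keepA X := by
  rintro X Y hXY ⟨a, b⟩ he
  obtain ⟨heX, hrej⟩ := Finset.mem_sdiff.1 he
  refine Finset.mem_sdiff.2 ⟨hXY heX, fun hkeep => hrej (mem_keepA.2 ?_)⟩
  exact mem_keep_of_subset (rowSet_mono hXY) (mem_rowSet.2 heX) (mem_keepA.1 hkeep)

theorem sdiff_keepB_mono : Monotone fun X => X \ I.keepB X := by
  rintro X Y hXY ⟨a, b⟩ he
  obtain ⟨heX, hrej⟩ := Finset.mem_sdiff.1 he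
  refine Finset.mem_sdiff.2 ⟨hXY heX, fun hkeep => hrej (mem_keepB.2 ?_)⟩
  exact mem_keep_of_subset (colSet_mono hXY) (mem_colSet.2 heX) (mem_keepB.1 hkeep)

theorem not_attractive_of_notMem_keepA (hX : (a, b) ∈ X) (hkeep : (a, b) ∉ I.keepA X) :
    ¬ Attractive (I.rankA a) (I.capA a) (rowSet (I.keepA X) a) b := by
  rw [rowSet_keepA]
  exact not_attractive_keep (mem_rowSet.2 hX) (mem_keepA.not.1 hkeep)

theorem not_attractive_of_notMem_keepB (hX : (a, b) ∈ X) (hkeep : (a, b) ∉ I.keepB X) :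
    ¬ Attractive (I.rankB b) (I.capB b) (colSet (I.keepB X) b) a := by
  rw [colSet_keepB]
  exact not_attractive_keep (mem_colSet.2 hX) (mem_keepB.not.1 hkeep)

theorem stable_of_keepA_eq_of_keepB_eq (hXY : X ∪ Y = I.E) (hA : I.keepA X = M)
    (hB : I.keepB Y = M) : I.Stable M := by
  have hXE : X ⊆ I.E := hXY ▸ Finset.subset_union_left
  have hYE : Y ⊆ I.E := hXY ▸ Finset.subset_union_right
  refine ⟨⟨?_, fun a => ?_, fun b => ?_⟩, ?_⟩
  · exact hA ▸ (Finset.filter_subset _ _).trans hXE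
  · rw [← hA, rowSet_keepA]
    exact card_keep_le ((I.rankA_injOn a).mono (coe_rowSet_subset hXE))
  · rw [← hB, colSet_keepB]
    exact card_keep_le ((I.rankB_injOn b).mono (coe_colSet_subset hYE))
  · rintro a b ⟨hE, hM, hattrA, hattrB⟩
    rw [← hXY, Finset.mem_union] at hE
    rcases hE with hX | hY
    · subst hA
      exact not_attractive_of_notMem_keepA hX hM hattrA
    · subst hB
      exact not_attractive_of_notMem_keepB hY hM hattrB

theorem exists_stable (I : PrefInstance α β) : ∃ M, I.Stable M := by
  let := Fintype.toCompleteBooleanAlgebra (Finset (α × β))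
  obtain ⟨X, Y, hXY, hA, hB⟩ := exists_sup_eq_and_eq_inf_and_eq_inf I.E
    (fun X => Finset.filter_subset _ X) (fun Y => Finset.filter_subset _ Y)
    I.sdiff_keepA_mono I.sdiff_keepB_mono
  exact ⟨X ∩ Y, stable_of_keepA_eq_of_keepB_eq hXY hA hB⟩

theorem sum_voteBound_le_sum_deltaA (hM : M ⊆ I.E) (hT : I.IsMatching T) :
    ∑ e ∈ T \ M, voteBound (I.rankA e.1) (I.capA e.1) (rowSet M e.1) e.2 ≤
      ∑ a, I.DeltaA M T a := by
  rw [Finset.sum_finset_product (T \ M) Finset.univ fun a => rowSet T a \ rowSet M a]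
  · refine Finset.sum_le_sum fun a _ => sum_voteBound_le_deltaSet (hT.2.1 a) ?_
    exact (I.rankA_injOn a).mono <| Set.union_subset (coe_rowSet_subset hM) (coe_rowSet_subset hT.1)
  · simp [mem_rowSet]

theorem sum_voteBound_le_sum_deltaB (hM : M ⊆ I.E) (hT : I.IsMatching T) :
    ∑ e ∈ T \ M, voteBound (I.rankB e.2) (I.capB e.2) (colSet M e.2) e.1 ≤
      ∑ b, I.DeltaB M T b := by
  rw [Finset.sum_finset_product_right (T \ M) Finset.univ fun b => colSet T b \ colSet M b]
  · refine Finset.sum_le_sum fun b _ => sum_voteBound_le_deltaSet (hT.2.2 b) ?_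
    exact (I.rankB_injOn b).mono <| Set.union_subset (coe_colSet_subset hM) (coe_colSet_subset hT.1)
  · simp [mem_colSet]

theorem Stable.voteBound_add_voteBound_nonneg (hM : I.Stable M) (hE : (a, b) ∈ I.E)
    (hnotMem : (a, b) ∉ M) :
    0 ≤ voteBound (I.rankA a) (I.capA a) (rowSet M a) b +
      voteBound (I.rankB b) (I.capB b) (colSet M b) a := by
  by_cases hA : Attractive (I.rankA a) (I.capA a) (rowSet M a) b
  · have hB : ¬ Attractive (I.rankB b) (I.capB b) (colSet M b) a :=
      fun hB => hM.2 a b ⟨hE, hnotMem, hA, hB⟩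
    simp [voteBound_of_attractive hA, voteBound_of_not_attractive hB]
  · rw [voteBound_of_not_attractive hA]
    linarith [neg_one_le_voteBound (r := I.rankB b) (c := I.capB b) (S₀ := colSet M b) (y := a)]

theorem Stable.popular (hM : I.Stable M) : I.Popular M := by
  refine ⟨hM.1, fun T hT => ?_⟩
  calc 0 ≤ ∑ e ∈ T \ M, (voteBound (I.rankA e.1) (I.capA e.1) (rowSet M e.1) e.2 +
        voteBound (I.rankB e.2) (I.capB e.2) (colSet M e.2) e.1) :=
        Finset.sum_nonneg fun e he =>
          have ⟨heT, heM⟩ := Finset.mem_sdiff.1 he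
          hM.voteBound_add_voteBound_nonneg (hT.1 heT) heM
    _ = ∑ e ∈ T \ M, voteBound (I.rankA e.1) (I.capA e.1) (rowSet M e.1) e.2 +
        ∑ e ∈ T \ M, voteBound (I.rankB e.2) (I.capB e.2) (colSet M e.2) e.1 :=
        Finset.sum_add_distrib
    _ ≤ I.Delta M T := add_le_add (sum_voteBound_le_sum_deltaA hM.1.1 hT)
        (sum_voteBound_le_sum_deltaB hM.1.1 hT)

end PrefInstance

/-- Every instance `G = (A ∪ B, E)` with capacities and strict
preferences admits a popular matching. -/
theorem statement6 {α β : Type*} [Fintype α] [Fintype β] [DecidableEq α] [DecidableEq β]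
    (I : PrefInstance α β) :
    ∃ M : Finset (α × β), I.Popular M := by
  obtain ⟨M, hM⟩ := I.exists_stable
  exact ⟨M, hM.popular⟩
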